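/- arXiv:1009.0508 — 2 statements merged into one kernel-verified Lean document; each statement's English description precedes it below -/
import Mathlib

section
/- Let A be a positive operator and B a self-adjoint operator on a Hilbert space. Then ‖[A^{1/2}, B]‖ ≤ (5/4) ‖B‖^{1/2} ‖[A, B]‖^{1/2}. -/
theorem pcs_scalar (s : ℝ) (hs : 0 ≤ s) :
    |Real.sqrt (s ^ 2 + 1) - s - (8 / 5) * (s ^ 2 + 4)⁻¹ - 3 / 10| ≤ 3 / 10 := by
  have h4 : 0 < s ^ 2 + 4 := by positivity
  set r := (s ^ 2 + 4)⁻¹ with hr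
  have hrm : r * (s ^ 2 + 4) = 1 := inv_mul_cancel₀ h4.ne'
  have hr0 : 0 < r := by positivity
  have hr4 : r ≤ 1 / 4 := by nlinarith [sq_nonneg s]
  rw [abs_le]
  constructor
  · have : s + 8 / 5 * r ≤ Real.sqrt (s ^ 2 + 1) := by
      apply Real.le_sqrt_of_sq_le
      have key : 0 ≤ (s^2+4)^2 - 16/5 * s * (s^2+4) - 64/25 := by
        nlinarith [sq_nonneg (s^2 - 8/5*s), sq_nonneg (s - 20/17)]
      have e : 1 - 16/5 * s * r - 64/25 * r^2
          = r^2 * ((s^2+4)^2 - 16/5 * s * (s^2+4) - 64/25) := by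
        have e2 : r^2 * (s^2+4)^2 = 1 := by rw [← mul_pow, hrm, one_pow]
        linear_combination (-1) * e2 + (16/5 * s * r) * hrm
      have := mul_nonneg (sq_nonneg r) key
      nlinarith
    linarith
  · have : Real.sqrt (s ^ 2 + 1) ≤ s + 3 / 5 + 8 / 5 * r := by
      apply Real.sqrt_le_iff.2
      refine ⟨by positivity, ?_⟩
      by_cases h9 : s ≤ 9
      · have h1 : 2 / 5 - s / 10 ≤ 8 / 5 * r := by
          have : 0 ≤ r * (s * (s - 2)^2) := by positivity
          nlinarith
        have h2 : 1 + 9 / 10 * s ≤ s + 3 / 5 + 8 / 5 * r := by linarith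
        have h3 := pow_le_pow_left₀ (by positivity) h2 2
        nlinarith
      · have h2 : s + 3 / 5 ≤ s + 3 / 5 + 8 / 5 * r := by linarith
        have h3 := pow_le_pow_left₀ (by positivity) h2 2
        nlinarith
    linarith

section
variable {𝒜 : Type*} [CStarAlgebra 𝒜]

theorem pcs_comm (X B : 𝒜) (m δ : ℝ) (hX : ‖X - algebraMap ℝ 𝒜 m‖ ≤ δ) :
    ‖X * B - B * X‖ ≤ 2 * δ * ‖B‖ := by
  have e : X * B - B * X = (X - algebraMap ℝ 𝒜 m) * B - B * (X - algebraMap ℝ 𝒜 m) := by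
    rw [sub_mul, mul_sub, Algebra.commutes m B]; abel
  rw [e]
  have h1 := norm_mul_le (X - algebraMap ℝ 𝒜 m) B
  have h2 := norm_mul_le B (X - algebraMap ℝ 𝒜 m)
  have h3 := norm_sub_le ((X - algebraMap ℝ 𝒜 m) * B) (B * (X - algebraMap ℝ 𝒜 m))
  nlinarith [norm_nonneg B]

theorem pcs_sylv (Q T : 𝒜) (m δ : ℝ) (hδ : δ + 1 ≤ m)
    (hX : ‖Q - algebraMap ℝ 𝒜 m‖ ≤ δ) :
    2 * ‖T‖ ≤ ‖Q * T + T * Q‖ := by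
  have e : (2 * m) • T = (Q * T + T * Q)
      - ((Q - algebraMap ℝ 𝒜 m) * T + T * (Q - algebraMap ℝ 𝒜 m)) := by
    rw [sub_mul, mul_sub, ← Algebra.commutes m T, ← Algebra.smul_def, two_mul, add_smul]; abel
  have hm : 0 ≤ m := by linarith [norm_nonneg (Q - algebraMap ℝ 𝒜 m)]
  have h0 : ‖(2 * m) • T‖ = 2 * m * ‖T‖ := by
    rw [norm_smul, Real.norm_of_nonneg (by positivity)]
  have h1 := norm_mul_le (Q - algebraMap ℝ 𝒜 m) T
  have h2 := norm_mul_le T (Q - algebraMap ℝ 𝒜 m)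
  have h3 := norm_add_le ((Q - algebraMap ℝ 𝒜 m) * T) (T * (Q - algebraMap ℝ 𝒜 m))
  have h4 := norm_sub_le (Q * T + T * Q)
    ((Q - algebraMap ℝ 𝒜 m) * T + T * (Q - algebraMap ℝ 𝒜 m))
  rw [← e, h0] at h4
  nlinarith [norm_nonneg T]

theorem pcs_sub_const (r : ℝ) (f : ℝ → ℝ) (S : 𝒜) (hS : IsSelfAdjoint S)
    (hf : ContinuousOn f (spectrum ℝ S)) :
    cfc (fun s => f s - r) S = cfc f S - algebraMap ℝ 𝒜 r := by
  rw [cfc_sub f (fun _ => r) S hf continuousOn_const, cfc_const r S]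

theorem pcs_unit (S B : 𝒜) (hS : IsSelfAdjoint S) (hpos : ∀ x ∈ spectrum ℝ S, 0 ≤ x) :
    ‖S * B - B * S‖ ≤ 3 / 5 * (‖S * S * B - B * (S * S)‖ + ‖B‖) := by
  have cR : Continuous (fun s : ℝ => (s ^ 2 + 4)⁻¹) :=
    Continuous.inv₀ (by fun_prop) (fun s => by positivity)
  have cQ : Continuous (fun s : ℝ => Real.sqrt (s ^ 2 + 1)) := by fun_prop
  set Q := cfc (fun s : ℝ => Real.sqrt (s ^ 2 + 1)) S with hQ
  set R := cfc (fun s : ℝ => (s ^ 2 + 4)⁻¹) S with hR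
  set D := S * S * B - B * (S * S) with hD
  have hSS : cfc (fun s : ℝ => s ^ 2) S = S * S := by
    rw [cfc_pow_id (R := ℝ) S 2, sq]
  have hQQ : Q * Q = S * S + 1 := by
    rw [hQ, ← cfc_mul (fun s : ℝ => Real.sqrt (s ^ 2 + 1)) (fun s : ℝ => Real.sqrt (s ^ 2 + 1)) S
      cQ.continuousOn cQ.continuousOn, ← hSS, ← cfc_one ℝ S,
      ← cfc_add S (fun s : ℝ => s ^ 2) _ (by fun_prop) (by fun_prop)]
    apply cfc_congr
    intro s _
    exact Real.mul_self_sqrt (by positivity)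
  have h4 : cfc (fun s : ℝ => s ^ 2 + 4) S = S * S + algebraMap ℝ 𝒜 4 := by
    rw [cfc_add_const (4 : ℝ) (fun s : ℝ => s ^ 2) S (by fun_prop), hSS]
  have hR1 : R * (S * S + algebraMap ℝ 𝒜 4) = 1 := by
    rw [← h4, hR, ← cfc_mul _ _ S cR.continuousOn (by fun_prop), ← cfc_one ℝ S]
    apply cfc_congr
    intro s _
    exact inv_mul_cancel₀ (by positivity)
  have hR2 : (S * S + algebraMap ℝ 𝒜 4) * R = 1 := by
    rw [← h4, hR, ← cfc_mul _ _ S (by fun_prop) cR.continuousOn, ← cfc_one ℝ S]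
    apply cfc_congr
    intro s _
    exact mul_inv_cancel₀ (by positivity)
  -- norm of R
  have hRn : ‖R‖ ≤ 1 / 4 := by
    apply norm_cfc_le (by norm_num)
    intro s _
    rw [Real.norm_of_nonneg (by positivity), inv_eq_one_div]
    exact one_div_le_one_div_of_le (by norm_num) (by nlinarith [sq_nonneg s])
  -- commutator with R
  have hRB : R * B - B * R = -(R * D * R) := by
    have e1 : R * D * R = R * ((S * S + algebraMap ℝ 𝒜 4) * B
        - B * (S * S + algebraMap ℝ 𝒜 4)) * R := by
      rw [add_mul, mul_add, Algebra.commutes (4 : ℝ) B, hD]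
      congr 2; abel
    rw [e1, mul_sub, sub_mul, ← mul_assoc R, hR1, one_mul, mul_assoc R (B * _), mul_assoc B,
      hR2, mul_one]
    abel
  have hRBn : ‖R * B - B * R‖ ≤ 1 / 16 * ‖D‖ := by
    rw [hRB, norm_neg]
    have h1 := norm_mul_le (R * D) R
    have h2 := norm_mul_le R D
    have h3 : ‖R‖ * ‖D‖ ≤ 1 / 4 * ‖D‖ := by gcongr
    have h5 : ‖R * D‖ * ‖R‖ ≤ (1 / 4 * ‖D‖) * (1 / 4) := by gcongr; linarith
    linarith
  -- commutator with Q
  have hQn : ∃ m δ : ℝ, δ + 1 ≤ m ∧ ‖Q - algebraMap ℝ 𝒜 m‖ ≤ δ := by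
    set q := Real.sqrt (‖S‖ ^ 2 + 1)
    have hq : 1 ≤ q := Real.one_le_sqrt.2 (by nlinarith [sq_nonneg ‖S‖])
    refine ⟨(q + 1) / 2, (q - 1) / 2, by linarith, ?_⟩
    rw [hQ, ← pcs_sub_const ((q + 1) / 2) _ S hS cQ.continuousOn]
    apply norm_cfc_le (by linarith)
    intro s hs
    have hsn : |s| ≤ ‖S‖ := by
      have : Nontrivial 𝒜 := by
        by_contra hn
        rw [not_nontrivial_iff_subsingleton] at hn
        simp [spectrum.of_subsingleton] at hs
      simpa using spectrum.norm_le_norm_of_mem hs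
    have h1 : 1 ≤ Real.sqrt (s ^ 2 + 1) := Real.one_le_sqrt.2 (by nlinarith [sq_nonneg s])
    have h2 : Real.sqrt (s ^ 2 + 1) ≤ q := by
      apply Real.sqrt_le_sqrt
      have := sq_le_sq' (by linarith [neg_abs_le s]) ((le_abs_self s).trans hsn)
      linarith
    rw [Real.norm_eq_abs, abs_le]
    constructor <;> linarith
  have hQB : 2 * ‖Q * B - B * Q‖ ≤ ‖D‖ := by
    obtain ⟨m, δ, h1, h2⟩ := hQn
    have := pcs_sylv Q (Q * B - B * Q) m δ h1 h2
    have e : Q * (Q * B - B * Q) + (Q * B - B * Q) * Q = D := by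
      have : Q * (Q * B - B * Q) + (Q * B - B * Q) * Q = (Q * Q) * B - B * (Q * Q) := by
        noncomm_ring
      rw [this, hQQ, hD]; noncomm_ring
    rwa [e] at this
  -- the remainder
  set X := Q - S - (8 / 5 : ℝ) • R with hX
  have hXc : X = cfc (fun s : ℝ => Real.sqrt (s ^ 2 + 1) - s - (8 / 5) * (s ^ 2 + 4)⁻¹) S := by
    rw [cfc_sub (fun s : ℝ => Real.sqrt (s ^ 2 + 1) - s) (fun s : ℝ => (8 / 5) * (s ^ 2 + 4)⁻¹) S
      (by fun_prop) (continuous_const.mul cR).continuousOn, cfc_sub (fun s : ℝ => Real.sqrt (s ^ 2 + 1)) (fun s : ℝ => s) S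
      (by fun_prop) (by fun_prop), cfc_const_mul (8 / 5 : ℝ) (fun s : ℝ => (s ^ 2 + 4)⁻¹) S
      cR.continuousOn, cfc_id' ℝ S]
  have hXn : ‖X - algebraMap ℝ 𝒜 (3 / 10)‖ ≤ 3 / 10 := by
    rw [hXc, ← pcs_sub_const (3 / 10 : ℝ)
      (fun s : ℝ => Real.sqrt (s ^ 2 + 1) - s - (8 / 5) * (s ^ 2 + 4)⁻¹) S hS
      (((cQ.sub continuous_id).sub (continuous_const.mul cR)).continuousOn)]
    apply norm_cfc_le (by norm_num)
    intro s hs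
    exact pcs_scalar s (hpos s hs)
  have hXB := pcs_comm X B _ _ hXn
  have e : S * B - B * S = (Q * B - B * Q) - (X * B - B * X) - (8 / 5 : ℝ) • (R * B - B * R) := by
    rw [hX]
    simp only [sub_mul, mul_sub, smul_sub, smul_mul_assoc, mul_smul_comm]
    abel
  rw [e]
  have n1 := norm_sub_le ((Q * B - B * Q) - (X * B - B * X)) ((8 / 5 : ℝ) • (R * B - B * R))
  have n2 := norm_sub_le (Q * B - B * Q) (X * B - B * X)
  rw [norm_smul, Real.norm_of_nonneg (by norm_num)] at n1
  linarith

open Pointwise in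
theorem pcs_scaled (S B : 𝒜) (hS : IsSelfAdjoint S) (hpos : ∀ x ∈ spectrum ℝ S, 0 ≤ x)
    (c : ℝ) (hc : 0 < c) :
    c * ‖S * B - B * S‖ ≤ 3 / 5 * (c ^ 2 * ‖S * S * B - B * (S * S)‖ + ‖B‖) := by
  have h := pcs_unit (c • S) B ((IsSelfAdjoint.all c).smul hS) (by
    intro x hx
    have hx' : x ∈ c • spectrum ℝ S := by
      have := spectrum.unit_smul_eq_smul (R := ℝ) S (Units.mk0 c hc.ne')
      have h2 : spectrum ℝ (c • S) = c • spectrum ℝ S := this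
      rwa [h2] at hx
    obtain ⟨y, hy, rfl⟩ := Set.mem_smul_set.1 hx'
    exact mul_nonneg hc.le (hpos y hy))
  simp only [smul_mul_assoc, mul_smul_comm, ← smul_sub, smul_smul] at h
  rw [norm_smul, norm_smul, Real.norm_of_nonneg hc.le, Real.norm_of_nonneg (by positivity)] at h
  rwa [sq]

end

theorem pcs_real (t b d : ℝ) (ht : 0 ≤ t) (hb : 0 ≤ b) (hd : 0 ≤ d) 
    (h : ∀ c : ℝ, 0 < c → c * t ≤ 3 / 5 * (c ^ 2 * d + b)) :
    t ≤ 5 / 4 * Real.sqrt b * Real.sqrt d := by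
  have key : t ^ 2 ≤ 36 / 25 * (b * d) := by
    have := discrim_le_zero (a := 3 / 5 * d) (b := - t) (c := 3 / 5 * b) (by
      intro c
      rcases le_or_gt c 0 with hc | hc
      · have := mul_nonneg (neg_nonneg.2 hc) ht
        have := mul_nonneg hd (mul_self_nonneg c)
        nlinarith
      · nlinarith [h c hc])
    unfold discrim at this
    nlinarith
  rw [mul_assoc, ← Real.sqrt_mul hb]
  have h2 : t ≤ Real.sqrt (36 / 25 * (b * d)) := Real.le_sqrt_of_sq_le key
  have h3 : Real.sqrt (36 / 25 * (b * d)) = 6 / 5 * Real.sqrt (b * d) := by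
    rw [Real.sqrt_mul (by norm_num), show (36 / 25 : ℝ) = (6 / 5) ^ 2 by norm_num,
      Real.sqrt_sq (by norm_num)]
  have := Real.sqrt_nonneg (b * d)
  linarith


/-- Pedersen's commutator inequality: if `A` is a positive operator and `B` a self-adjoint
operator on a Hilbert space, then `‖[A^{1/2}, B]‖ ≤ (5/4) ‖B‖^{1/2} ‖[A, B]‖^{1/2}`.
Here the positive square root `A^{1/2}` is represented by any positive operator `S` with
`S * S = A`. -/
theorem commutator_sqrt_inequality {H : Type*} [NormedAddCommGroup H]
    [InnerProductSpace ℂ H] [CompleteSpace H] (A B : H →L[ℂ] H)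
    (hA : A.IsPositive) (hB : IsSelfAdjoint B)
    (S : H →L[ℂ] H) (hS : S.IsPositive) (hSA : S * S = A) :
    ‖S * B - B * S‖ ≤ (5 / 4 : ℝ) * Real.sqrt ‖B‖ * Real.sqrt ‖A * B - B * A‖ := by
  subst hSA
  have h0 : (0 : H →L[ℂ] H) ≤ S := (ContinuousLinearMap.nonneg_iff_isPositive S).2 hS
  exact pcs_real _ _ _ (norm_nonneg _) (norm_nonneg _) (norm_nonneg _)
    (pcs_scaled S B hS.isSelfAdjoint (fun x hx => spectrum_nonneg_of_nonneg h0 hx))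
end

section
/- Let T be a positive block-diagonal band-limited operator and V a 1-raising band-limited operator on H = ⊕ H_n. If Σ_{n=0}^∞ ‖[T,V]|_{H_n}‖^{1/2} < ∞, then the commutator [T^{1/2}, V] is a summable 1-raising operator; in particular, for each n, ‖T_{n+1}^{1/2} V_n − V_n T_n^{1/2}‖ ≤ (5/4) ‖V‖^{1/2} ‖T_{n+1} V_n − V_n T_n‖^{1/2}, where T_n = T|_{H_n} and V_n = V|_{H_n}. -/
open scoped ComplexOrder

variable {H : Type*} [NormedAddCommGroup H] [InnerProductSpace ℂ H] [CompleteSpace H]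

/-- `T` is band-limited (with respect to the orthogonal decomposition `H = ⊕ₙ Hₙ` given by the
projections `P n`): there is a band limit `b` with `T(Hₙ) ⊆ ⊕_{|m-n| ≤ b} Hₘ` for all `n`. -/
def BandLimited (P : ℕ → H →L[ℂ] H) (T : H →L[ℂ] H) : Prop :=
  ∃ b : ℕ, ∀ m n : ℕ, (n + b < m ∨ m + b < n) → (P m).comp (T.comp (P n)) = 0

/-- `T` is summable: `Σₙ ‖T|_{Hₙ}‖ < ∞`. -/
def SummableRestrictions (P : ℕ → H →L[ℂ] H) (T : H →L[ℂ] H) : Prop :=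
  Summable fun n => ‖T.comp (P n)‖

/-- `T` is a summable band-limited operator. -/
def SBL (P : ℕ → H →L[ℂ] H) (T : H →L[ℂ] H) : Prop :=
  BandLimited P T ∧ SummableRestrictions P T

section CStarLemmas

variable {A : Type*} [CStarAlgebra A] [PartialOrder A] [StarOrderedRing A]

lemma aux_sub_le {R S : A} (hR : 0 ≤ R) (hS : 0 ≤ S) :
    R - S ≤ algebraMap ℝ A (Real.sqrt ‖R * R - S * S‖) := by
  set k := ‖R * R - S * S‖ with hk
  set a : A := algebraMap ℝ A (Real.sqrt k) with ha
  have hRs : IsSelfAdjoint R := .of_nonneg hR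
  have hSs : IsSelfAdjoint S := .of_nonneg hS
  have hW : IsSelfAdjoint (R * R - S * S) := by
    have h1 : IsSelfAdjoint (R * R) := by simp [IsSelfAdjoint, hRs.star_eq]
    have h2 : IsSelfAdjoint (S * S) := by simp [IsSelfAdjoint, hSs.star_eq]
    exact h1.sub h2
  have h0 : 0 ≤ a := algebraMap_nonneg A (Real.sqrt_nonneg k)
  have haa : a * a = algebraMap ℝ A k := by
    rw [ha, ← map_mul, Real.mul_self_sqrt (norm_nonneg _)]
  have h1 : R * R - S * S ≤ a * a := haa ▸ hW.le_algebraMap_norm_self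
  have hc : a * S = S * a := Algebra.commutes _ _
  have haS : 0 ≤ S * a := by
    rw [ha, ← Algebra.commutes, ← Algebra.smul_def]
    exact smul_nonneg (Real.sqrt_nonneg k) hS
  have h2 : R * R ≤ (S + a) * (S + a) := by
    have : (S + a) * (S + a) = S * S + a * a + (S * a + S * a) := by
      rw [add_mul, mul_add, mul_add, hc]; abel
    rw [this]
    have h3 : R * R ≤ S * S + a * a := by rw [← sub_le_iff_le_add']; exact h1
    exact h3.trans (le_add_of_nonneg_right (add_nonneg haS haS))
  have h4 := CFC.sqrt_le_sqrt _ _ h2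
  rw [CFC.sqrt_mul_self R hR, CFC.sqrt_mul_self (S + a) (add_nonneg hS h0)] at h4
  rw [sub_le_iff_le_add']; exact h4

lemma aux_norm_sub_le {R S : A} (hR : 0 ≤ R) (hS : 0 ≤ S) :
    ‖R - S‖ ≤ Real.sqrt ‖R * R - S * S‖ := by
  have h1 := aux_sub_le hR hS
  have h2 := aux_sub_le hS hR
  rw [norm_sub_rev] at h2
  rcases subsingleton_or_nontrivial A with h | h
  · rw [Subsingleton.elim (R - S) 0]; simp
  have hW : IsSelfAdjoint (R - S) := (IsSelfAdjoint.of_nonneg hR).sub (.of_nonneg hS)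
  have hW' : IsSelfAdjoint (S - R) := (IsSelfAdjoint.of_nonneg hS).sub (.of_nonneg hR)
  rw [le_algebraMap_iff_spectrum_le] at h1 h2
  rcases CStarAlgebra.norm_or_neg_norm_mem_spectrum hW with h | h
  · exact h1 _ h
  · apply h2
    rw [← neg_sub R S, ← spectrum.neg_eq]
    simpa using h

lemma aux_unitary {U S : A} (h1 : star U * U = 1) (h2 : U * star U = 1) (hS : 0 ≤ S) :
    ‖U * S - S * U‖ ≤ Real.sqrt ‖U * (S * S) - (S * S) * U‖ := by
  have hR : 0 ≤ U * S * star U := star_right_conjugate_nonneg hS U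
  have hU : ‖U‖ ≤ 1 ∧ ‖star U‖ ≤ 1 := by
    rcases subsingleton_or_nontrivial A with h | h
    · rw [Subsingleton.elim U 0]; simp
    have : ‖U‖ * ‖U‖ = 1 := by rw [← CStarRing.norm_star_mul_self, h1]; simp
    rw [norm_star]
    constructor <;> nlinarith [norm_nonneg U]
  have h3 : U * S - S * U = (U * S * star U - S) * U := by
    rw [sub_mul, mul_assoc (U * S), h1, mul_one]
  have h4 : (U * S * star U) * (U * S * star U) - S * S =
      (U * (S * S) - (S * S) * U) * star U := by
    have e : (U * S * star U) * (U * S * star U) = U * S * (star U * U) * S * star U := by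
      noncomm_ring
    rw [e, h1, sub_mul, mul_assoc (S * S), h2]; noncomm_ring
  calc ‖U * S - S * U‖ ≤ ‖U * S * star U - S‖ * ‖U‖ := h3 ▸ norm_mul_le _ _
    _ ≤ ‖U * S * star U - S‖ := mul_le_of_le_one_right (norm_nonneg _) hU.1
    _ ≤ _ := aux_norm_sub_le hR hS
    _ ≤ _ := by
      apply Real.sqrt_le_sqrt
      rw [h4]
      exact (norm_mul_le _ _).trans (mul_le_of_le_one_right (norm_nonneg _) hU.2)

/-- Cayley transform estimate. -/
lemma aux_cayley {B S : A} (hB : IsSelfAdjoint B) (hS : 0 ≤ S) {b c : ℝ} (hc : 0 < c)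
    (hb : ‖B‖ ≤ b) :
    ‖B * S - S * B‖ ≤ (b ^ 2 + c ^ 2) / (2 * c) *
      Real.sqrt (2 / c * ‖B * (S * S) - (S * S) * B‖) := by
  rcases subsingleton_or_nontrivial A with h | h
  · rw [Subsingleton.elim (B * S - S * B) 0, norm_zero]; positivity
  set z : ℂ := (c : ℂ) * Complex.I with hz
  set w : A := algebraMap ℂ A z with hw
  have hwz : star w = - w := by
    rw [hw, ← algebraMap_star_comm, ← map_neg]; congr 1; simp [hz]
  have hww : w * w = - algebraMap ℝ A (c ^ 2) := by
    rw [hw, ← map_mul, IsScalarTower.algebraMap_apply ℝ ℂ A, ← map_neg]; congr 1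
    simp only [hz, Complex.coe_algebraMap]
    push_cast
    linear_combination (c:ℂ)^2 * Complex.I_mul_I
  have hwc : ∀ x : A, w * x = x * w := fun x => Algebra.commutes _ _
  have hwn : ‖w‖ = c := by rw [hw, norm_algebraMap']; simp [hz, abs_of_pos hc]
  have hu : IsUnit (B + w) := by
    have : -z ∉ spectrum ℂ B := by
      intro hm
      have := hB.im_eq_zero_of_mem_spectrum hm
      simp [hz] at this
      exact hc.ne' this
    rw [spectrum.notMem_iff] at this
    have := this.neg
    convert this using 1
    rw [map_neg]; simp only [hw]; abel
  obtain ⟨N, hN⟩ := hu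
  set G : A := (↑(N⁻¹) : A) with hG
  have hNG : (B + w) * G = 1 := by rw [← hN]; exact N.mul_inv
  have hGN : G * (B + w) = 1 := by rw [← hN]; exact N.inv_mul
  have hstar : star (B + w) = B - w := by rw [star_add, hB.star_eq, hwz]; abel
  have hsG : star G * (B - w) = 1 := by rw [← hstar, ← star_mul, hNG, star_one]
  have hGs : (B - w) * star G = 1 := by rw [← hstar, ← star_mul, hGN, star_one]
  have hNN : (B - w) * (B + w) = B * B + algebraMap ℝ A (c ^ 2) := by
    rw [sub_mul, mul_add, mul_add, hww, hwc B]; abel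
  have hNN' : (B + w) * (B - w) = B * B + algebraMap ℝ A (c ^ 2) := by
    rw [add_mul, mul_sub, mul_sub, hww, hwc B]; abel
  -- norm of `B + w`
  have hnN : ‖B + w‖ * ‖B + w‖ ≤ b ^ 2 + c ^ 2 := by
    rw [← CStarRing.norm_star_mul_self, hstar, hNN]
    refine (norm_add_le _ _).trans (add_le_add ?_ ?_)
    · refine (norm_mul_le _ _).trans ?_
      nlinarith [norm_nonneg B]
    · rw [norm_algebraMap']; simp
  -- norm of `G`
  have hnG : ‖G‖ * ‖G‖ ≤ 1 / c ^ 2 := by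
    have e1 : star (B * G) * (B * G) + (c ^ 2) • (star G * G) = 1 := by
      have : star G * ((B - w) * (B + w)) * G = 1 := by
        have : star G * ((B - w) * (B + w)) * G = (star G * (B - w)) * ((B + w) * G) := by
          noncomm_ring
        rw [this, hsG, hNG, one_mul]
      rw [← this, hNN, star_mul, hB.star_eq, Algebra.smul_def, Algebra.commutes]
      rw [mul_add, add_mul, mul_assoc (star G) (algebraMap ℝ A _), Algebra.commutes (c ^ 2) G]
      noncomm_ring
    have e2 : (c ^ 2) • (star G * G) ≤ 1 := by
      rw [← e1]; exact le_add_of_nonneg_left (star_mul_self_nonneg _)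
    have e3 : ‖(c ^ 2) • (star G * G)‖ ≤ ‖(1 : A)‖ :=
      CStarAlgebra.norm_le_norm_of_nonneg_of_le
        (smul_nonneg (by positivity) (star_mul_self_nonneg _)) e2
    rw [norm_smul, CStarRing.norm_star_mul_self, norm_one] at e3
    rw [le_div_iff₀ (by positivity)]
    simpa [mul_comm] using e3
  set U : A := (B - w) * G with hU
  have hGcomm : G * (B - w) = (B - w) * G := by
    have e : (B - w) * (B + w) = (B + w) * (B - w) := by rw [hNN, hNN']
    calc G * (B - w) = G * (B - w) * ((B + w) * G) := by rw [hNG, mul_one]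
      _ = G * ((B - w) * (B + w)) * G := by noncomm_ring
      _ = (G * (B + w)) * ((B - w) * G) := by rw [e]; noncomm_ring
      _ = _ := by rw [hGN, one_mul]
  have hsU : star U = star G * (B + w) := by
    rw [hU, star_mul, star_sub, hB.star_eq, hwz]; simp
  have hU1 : star U * U = 1 := by
    calc star U * U = star G * ((B + w) * (B - w)) * G := by rw [hsU, hU]; noncomm_ring
      _ = (star G * (B - w)) * ((B + w) * G) := by rw [hNN', ← hNN]; noncomm_ring
      _ = 1 := by rw [hsG, hNG, one_mul]
  have hU2 : U * star U = 1 := by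
    have e : star G * (B + w) = (B + w) * star G := by
      have := congrArg star hGcomm
      simp only [star_mul, star_sub, hB.star_eq, hwz, sub_neg_eq_add] at this
      exact this.symm
    calc U * star U = (G * (B - w)) * ((B + w) * star G) := by rw [hsU, hU, e, hGcomm]
      _ = G * ((B - w) * (B + w)) * star G := by noncomm_ring
      _ = (G * (B + w)) * ((B - w) * star G) := by rw [hNN, ← hNN']; noncomm_ring
      _ = 1 := by rw [hGs, hGN, one_mul]
  have hUG : U = 1 - 2 * w * G := by
    rw [hU, ← hNG]; noncomm_ring
  have hcomm : ∀ Y : A, U * Y - Y * U = 2 * w * (G * (B * Y - Y * B) * G) := by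
    intro Y
    have e1 : G * (B * Y - Y * B) * G = Y * G - G * Y := by
      have : B * Y - Y * B = (B + w) * Y - Y * (B + w) := by
        rw [add_mul, mul_add, hwc Y]; abel
      rw [this]
      calc G * ((B + w) * Y - Y * (B + w)) * G
          = (G * (B + w)) * Y * G - G * Y * ((B + w) * G) := by noncomm_ring
        _ = _ := by rw [hGN, hNG, one_mul, mul_one]
    rw [e1, hUG, mul_sub, mul_sub, sub_mul, one_mul, mul_one]
    have e2 : Y * (2 * w * G) = 2 * w * (Y * G) := by
      have : Y * (2 * w * G) = 2 * ((Y * w) * G) := by noncomm_ring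
      rw [this, ← hwc]; noncomm_ring
    rw [e2]; noncomm_ring
  have h2w : (2 : A) * w = algebraMap ℂ A (2 * z) := by rw [map_mul, hw, map_ofNat]
  have hn2w : ‖(2 : A) * w‖ = 2 * c := by
    rw [h2w, norm_algebraMap']; simp [hz, abs_of_pos hc]
  have hscal : ∀ Y : A, ‖2 * w * Y‖ = 2 * c * ‖Y‖ := by
    intro Y
    rw [h2w, ← Algebra.smul_def, norm_smul]; simp [hz, abs_of_pos hc]
  have hup : ‖U * (S * S) - (S * S) * U‖ ≤ 2 / c * ‖B * (S * S) - (S * S) * B‖ := by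
    rw [hcomm, hscal]
    set k := ‖B * (S * S) - (S * S) * B‖
    have : ‖G * (B * (S * S) - (S * S) * B) * G‖ ≤ (‖G‖ * k) * ‖G‖ :=
      (norm_mul_le _ _).trans (mul_le_mul_of_nonneg_right (norm_mul_le _ _) (norm_nonneg _))
    have hk : 0 ≤ k := norm_nonneg _
    calc 2 * c * _ ≤ 2 * c * ((‖G‖ * k) * ‖G‖) := by gcongr
      _ = 2 * c * k * (‖G‖ * ‖G‖) := by ring
      _ ≤ 2 * c * k * (1 / c ^ 2) := by gcongr
      _ = _ := by field_simp
  have hdown : ‖B * S - S * B‖ ≤ (b ^ 2 + c ^ 2) / (2 * c) * ‖U * S - S * U‖ := by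
    rw [hcomm, hscal]
    set g := G * (B * S - S * B) * G with hg
    have e : B * S - S * B = (B + w) * g * (B + w) := by
      calc B * S - S * B = ((B + w) * G) * (B * S - S * B) * (G * (B + w)) := by
            rw [hNG, hGN, one_mul, mul_one]
        _ = _ := by rw [hg]; noncomm_ring
    have : ‖B * S - S * B‖ ≤ (‖B + w‖ * ‖g‖) * ‖B + w‖ := by
      rw [e]
      exact (norm_mul_le _ _).trans (mul_le_mul_of_nonneg_right (norm_mul_le _ _) (norm_nonneg _))
    calc _ ≤ _ := this
      _ = (‖B + w‖ * ‖B + w‖) * ‖g‖ := by ring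
      _ ≤ (b ^ 2 + c ^ 2) * ‖g‖ := by gcongr
      _ = _ := by field_simp
  calc _ ≤ _ := hdown
    _ ≤ _ := by
      gcongr
      exact (aux_unitary hU1 hU2 hS).trans (Real.sqrt_le_sqrt hup)

lemma aux_five_fourths {B S : A} (hB : IsSelfAdjoint B) (hS : 0 ≤ S) {b : ℝ} (hb : ‖B‖ ≤ b) :
    ‖B * S - S * B‖ ≤ 5 / 4 * Real.sqrt b * Real.sqrt ‖B * (S * S) - (S * S) * B‖ := by
  have hb0 : 0 ≤ b := (norm_nonneg _).trans hb
  rcases hb0.eq_or_lt with h | h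
  · have : B = 0 := by rw [← norm_le_zero_iff, h]; exact hb
    simp [this]
  have key := aux_cayley hB hS (c := 7 / 4 * b) (by positivity) hb
  refine key.trans ?_
  set k := ‖B * (S * S) - (S * S) * B‖
  have hk : 0 ≤ k := norm_nonneg _
  rw [mul_assoc, ← Real.sqrt_mul hb0]
  refine (sq_le_sq₀ (by positivity) (by positivity)).1 ?_
  rw [mul_pow _ (Real.sqrt _), mul_pow _ (Real.sqrt (b * k)), Real.sq_sqrt (by positivity), Real.sq_sqrt (by positivity)]
  have : ((b ^ 2 + (7 / 4 * b) ^ 2) / (2 * (7 / 4 * b))) ^ 2 * (2 / (7 / 4 * b) * k)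
      = (65 / 56) ^ 2 * (8 / 7) * (b * k) := by
    field_simp; ring
  rw [this]
  have := mul_nonneg hb0 hk
  nlinarith

/-- off-diagonal blocks -/
lemma aux_block {P Q X : A} (hP : IsSelfAdjoint P) (hQ : IsSelfAdjoint Q) (hPP : P * P = P)
    (hQQ : Q * Q = Q) (hPQ : P * Q = 0) (hQP : Q * P = 0) (hQX : Q * X = X) (hXP : X * P = X)
    {e : ℝ} (he : e * e = 1) : ‖X + e • star X‖ ≤ ‖X‖ := by
  have hXX : X * X = 0 := by
    calc X * X = (X * P) * (Q * X) := by rw [hQX, hXP]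
      _ = X * (P * Q) * X := by noncomm_ring
      _ = 0 := by rw [hPQ]; simp
  have hXX' : star X * star X = 0 := by rw [← star_mul, hXX, star_zero]
  have h1 : star (X + e • star X) * (X + e • star X) = star X * X + X * star X := by
    simp only [star_add, star_smul, star_star, star_trivial, add_mul, mul_add, smul_mul_assoc,
      mul_smul_comm, hXX, hXX', smul_smul, he, one_smul, smul_zero, zero_add, add_zero]
  have h2 : star X * X ≤ (‖X‖ ^ 2) • P := by
    have := star_left_conjugate_le_conjugate (CStarAlgebra.star_mul_le_algebraMap_norm_sq (a := X)) P
    have e1 : star P * (star X * X) * P = star X * X := by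
      calc star P * (star X * X) * P = star (X * P) * (X * P) := by rw [star_mul]; noncomm_ring
        _ = _ := by rw [hXP]
    rw [e1, ← Algebra.commutes, mul_assoc, hP.star_eq, hPP, ← Algebra.smul_def] at this
    exact this
  have h3 : X * star X ≤ (‖X‖ ^ 2) • Q := by
    have := star_left_conjugate_le_conjugate (CStarAlgebra.mul_star_le_algebraMap_norm_sq (a := X)) Q
    have e1 : star Q * (X * star X) * Q = X * star X := by
      calc star Q * (X * star X) * Q = (Q * X) * star (Q * X) := by
            rw [star_mul, hQ.star_eq]; noncomm_ring
        _ = _ := by rw [hQX]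
    rw [e1, ← Algebra.commutes, mul_assoc, hQ.star_eq, hQQ, ← Algebra.smul_def] at this
    exact this
  have h4 : P + Q ≤ 1 := by
    have e1 : star (1 - (P + Q)) * (1 - (P + Q)) = 1 - (P + Q) := by
      rw [star_sub, star_add, hP.star_eq, hQ.star_eq, star_one]
      simp only [sub_mul, mul_sub, add_mul, mul_add, hPP, hQQ, hPQ, hQP, one_mul, mul_one]
      abel
    rw [← sub_nonneg, ← e1]; exact star_mul_self_nonneg _
  have h5 : star X * X + X * star X ≤ algebraMap ℝ A (‖X‖ ^ 2) := by
    refine (add_le_add h2 h3).trans ?_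
    rw [← smul_add, Algebra.algebraMap_eq_smul_one]
    exact smul_le_smul_of_nonneg_left h4 (by positivity)
  have h6 : ‖star X * X + X * star X‖ ≤ ‖X‖ ^ 2 :=
    (CStarAlgebra.norm_le_iff_le_algebraMap _ (by positivity)
      (add_nonneg (star_mul_self_nonneg _) (mul_star_self_nonneg _))).2 h5
  rw [← h1, CStarRing.norm_star_mul_self, ← sq] at h6
  exact (sq_le_sq₀ (norm_nonneg _) (norm_nonneg _)).1 h6

lemma aux_norm_proj {P : A} (hP : IsSelfAdjoint P) (hPP : P * P = P) : ‖P‖ ≤ 1 := by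
  have h := CStarRing.norm_star_mul_self (x := P)
  rw [hP.star_eq, hPP] at h
  by_contra! h1
  nlinarith

lemma aux_main {P Q X S : A} (hP : IsSelfAdjoint P) (hQ : IsSelfAdjoint Q) (hPP : P * P = P)
    (hQQ : Q * Q = Q) (hPQ : P * Q = 0) (hQP : Q * P = 0) (hQX : Q * X = X) (hXP : X * P = X)
    (hS : 0 ≤ S) (hSP : S * P = P * S) (hSQ : S * Q = Q * S) {b : ℝ} (hb : ‖X‖ ≤ b) :
    ‖S * X - X * S‖ ≤ 5 / 4 * Real.sqrt b * Real.sqrt ‖(S * S) * X - X * (S * S)‖ := by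
  have hSs : IsSelfAdjoint S := .of_nonneg hS
  set B := X + star X with hBdef
  have hB : IsSelfAdjoint B := by simp [IsSelfAdjoint, hBdef, add_comm]
  have hBn : ‖B‖ ≤ b := by
    have := aux_block hP hQ hPP hQQ hPQ hQP hQX hXP (e := 1) (by norm_num)
    rw [one_smul] at this
    exact this.trans hb
  have hPX : star X * Q = star X ∧ P * star X = star X := by
    constructor
    · rw [← hQ.star_eq, ← star_mul, hQX]
    · rw [← hP.star_eq, ← star_mul, hXP]
  have key := aux_five_fourths hB hS hBn
  have hK : ‖B * (S * S) - (S * S) * B‖ ≤ ‖(S * S) * X - X * (S * S)‖ := by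
    set K := (S * S) * X - X * (S * S) with hKdef
    have hQK : Q * K = K := by
      rw [hKdef, mul_sub]
      have : Q * (S * S * X) = S * S * X := by
        calc Q * (S * S * X) = (Q * S) * S * X := by noncomm_ring
          _ = (S * Q) * S * X := by rw [hSQ]
          _ = S * (Q * S) * X := by noncomm_ring
          _ = S * (S * Q) * X := by rw [hSQ]
          _ = S * S * (Q * X) := by noncomm_ring
          _ = _ := by rw [hQX]
      rw [this, ← mul_assoc Q X, hQX]
    have hKP : K * P = K := by
      rw [hKdef, sub_mul]
      have : X * (S * S) * P = X * (S * S) := by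
        calc X * (S * S) * P = X * S * (S * P) := by noncomm_ring
          _ = X * S * (P * S) := by rw [hSP]
          _ = X * (S * P) * S := by noncomm_ring
          _ = X * (P * S) * S := by rw [hSP]
          _ = (X * P) * S * S := by noncomm_ring
          _ = _ := by rw [hXP]; noncomm_ring
      rw [this, mul_assoc (S * S) X P, hXP]
    have := aux_block hP hQ hPP hQQ hPQ hQP hQK hKP (e := -1) (by norm_num)
    have e : B * (S * S) - (S * S) * B = -(K + (-1 : ℝ) • star K) := by
      rw [hKdef, hBdef]
      simp only [star_sub, star_mul, hSs.star_eq, neg_smul, one_smul]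
      noncomm_ring
    rw [e, norm_neg]
    exact this
  have hD : S * X - X * S = - (Q * (B * S - S * B) * P) := by
    have e1 : Q * star X = 0 := by rw [← hPX.2, ← mul_assoc, hQP, zero_mul]
    have e2 : star X * P = 0 := by rw [← hPX.1, mul_assoc, hQP, mul_zero]
    have e3 : Q * (B * S - S * B) * P = (Q * B) * (S * P) - (Q * S) * (B * P) := by noncomm_ring
    have e4 : Q * B = X := by rw [hBdef, mul_add, hQX, e1, add_zero]
    have e5 : B * P = X := by rw [hBdef, add_mul, hXP, e2, add_zero]
    rw [e3, e4, e5, hSP, ← hSQ, ← mul_assoc, hXP, mul_assoc S, hQX]; abel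
  have hP1 := aux_norm_proj hP hPP
  have hQ1 := aux_norm_proj hQ hQQ
  calc ‖S * X - X * S‖ = ‖Q * (B * S - S * B) * P‖ := by rw [hD, norm_neg]
    _ ≤ ‖Q‖ * ‖B * S - S * B‖ * ‖P‖ :=
      (norm_mul_le _ _).trans (mul_le_mul_of_nonneg_right (norm_mul_le _ _) (norm_nonneg _))
    _ ≤ 1 * ‖B * S - S * B‖ * 1 := by gcongr
    _ ≤ _ := by
      rw [one_mul, mul_one]
      refine key.trans ?_
      gcongr

end CStarLemmas

lemma aux_ext {P : ℕ → H →L[ℂ] H} (htotal : ∀ x : H, HasSum (fun n => P n x) x)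
    {Y : H →L[ℂ] H} (j : ℕ) (h : ∀ m, m ≠ j → P m * Y = 0) : P j * Y = Y := by
  ext x
  have h1 := htotal (Y x)
  have h2 : HasSum (fun n => P n (Y x)) (P j (Y x)) := by
    apply hasSum_single
    intro m hm
    exact congrArg (fun f : H →L[ℂ] H => f x) (h m hm)
  exact h2.unique h1

/-- Let `T` be a positive block-diagonal operator and `V` a `1`-raising operator on
`H = ⊕ₙ Hₙ`. If `Σₙ ‖[T,V]|_{Hₙ}‖^{1/2} < ∞`, then `[T^{1/2}, V]` is a summable `1`-raising
operator; in particular `‖[T^{1/2},V]|_{Hₙ}‖ ≤ (5/4) ‖V‖^{1/2} ‖[T,V]|_{Hₙ}‖^{1/2}` for each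
`n`. Here the positive square root `T^{1/2}` is represented by any positive operator `S`
with `S * S = T`. -/
theorem commutator_sqrt_summable (P : ℕ → H →L[ℂ] H)
    (hsa : ∀ n, IsSelfAdjoint (P n)) (hidem : ∀ n, P n * P n = P n)
    (horth : ∀ m n, m ≠ n → P m * P n = 0)
    (htotal : ∀ x : H, HasSum (fun n => P n x) x)
    (T V : H →L[ℂ] H) (hT : T.IsPositive)
    (hTdiag : ∀ m n : ℕ, m ≠ n → (P m).comp (T.comp (P n)) = 0)
    (hV : ∀ m n : ℕ, m ≠ n + 1 → (P m).comp (V.comp (P n)) = 0)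
    (hsum : Summable fun n => Real.sqrt ‖((T * V - V * T).comp (P n) : H →L[ℂ] H)‖)
    (S : H →L[ℂ] H) (hS : S.IsPositive) (hST : S * S = T) :
    (∀ m n : ℕ, m ≠ n + 1 → (P m).comp ((S * V - V * S).comp (P n)) = 0) ∧
    (Summable fun n => ‖((S * V - V * S).comp (P n) : H →L[ℂ] H)‖) ∧
    (∀ n, ‖((S * V - V * S).comp (P n) : H →L[ℂ] H)‖ ≤
      (5 / 4 : ℝ) * Real.sqrt ‖V‖ * Real.sqrt ‖((T * V - V * T).comp (P n) : H →L[ℂ] H)‖) := by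
  have hS0 : 0 ≤ S := (ContinuousLinearMap.nonneg_iff_isPositive S).2 hS
  have hTs : IsSelfAdjoint T := hT.isSelfAdjoint
  have hTP : ∀ n, Commute T (P n) := by
    intro n
    have h1 : P n * (T * P n) = T * P n := aux_ext htotal n fun m hm => hTdiag m n hm
    have h2 := congrArg star h1
    simp only [star_mul, hTs.star_eq, (hsa n).star_eq] at h2
    rw [commute_iff_eq, ← h1, ← h2, mul_assoc]
  have hSP : ∀ n, S * P n = P n * S := by
    intro n
    have h1 : CFC.sqrt T = S := CFC.sqrt_unique hST hS0
    have h2 : Commute (CFC.sqrt T) (P n) := (hTP n).cfcₙ_nnreal _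
    rw [h1] at h2
    exact h2
  have hVP : ∀ n, P (n + 1) * (V * P n) = V * P n := fun n =>
    aux_ext htotal (n + 1) fun m hm => hV m n hm
  have hbound : ∀ n, ‖((S * V - V * S).comp (P n) : H →L[ℂ] H)‖ ≤
      (5 / 4 : ℝ) * Real.sqrt ‖V‖ * Real.sqrt ‖((T * V - V * T).comp (P n) : H →L[ℂ] H)‖ := by
    intro n
    have hn : ‖V * P n‖ ≤ ‖V‖ := (norm_mul_le _ _).trans
      (mul_le_of_le_one_right (norm_nonneg _) (aux_norm_proj (hsa n) (hidem n)))
    have key := aux_main (hsa n) (hsa (n + 1)) (hidem n) (hidem (n + 1))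
      (horth _ _ (by omega)) (horth _ _ (by omega)) (hVP n)
      (by rw [mul_assoc, hidem]) hS0 (hSP n) (hSP (n + 1)) hn
    have e1 : S * (V * P n) - V * P n * S = (S * V - V * S) * P n := by
      rw [sub_mul, mul_assoc V (P n), ← hSP]; noncomm_ring
    have e2 : S * S * (V * P n) - V * P n * (S * S) = (T * V - V * T) * P n := by
      rw [hST, sub_mul, mul_assoc V (P n), ← (hTP n).eq]; noncomm_ring
    rw [e1, e2] at key
    exact key
  refine ⟨?_, ?_, hbound⟩
  · intro m n hmn
    have h0 : P m * (V * P n) = 0 := hV m n hmn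
    change P m * ((S * V - V * S) * P n) = 0
    calc P m * ((S * V - V * S) * P n) = (P m * S) * (V * P n) - P m * V * (S * P n) := by
          noncomm_ring
      _ = S * (P m * (V * P n)) - (P m * (V * P n)) * S := by
          rw [← hSP m, hSP n]; noncomm_ring
      _ = 0 := by rw [h0]; simp
  · exact Summable.of_nonneg_of_le (fun n => norm_nonneg _) hbound (hsum.mul_left _)
end
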